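/- arXiv:1711.03056 — 3 statements merged into one kernel-verified Lean document; each statement's English description precedes it below -/
import Mathlib

section
/- There exist decidable equivalence relations F and G on ℕ such that F ∨ G (the transitive closure of F ∪ G) is a semi-decidable equivalence relation in which every equivalence class is finite (FC), F ∨ G is not decidable, and F ∨ G equals the composition FGF. -/
/-- `E` is an equivalence relation on ℕ, viewed as a set of pairs:
reflexive, symmetric, transitive. -/
def IsEquivRel (E : Set (ℕ × ℕ)) : Prop :=
  (∀ n, (n, n) ∈ E) ∧ (∀ ⦃i j⦄, (i, j) ∈ E → (j, i) ∈ E) ∧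
    (∀ ⦃i j k⦄, (i, j) ∈ E → (j, k) ∈ E → (i, k) ∈ E)

/-- `H` is a symmetric relation. -/
def IsSymRel (H : Set (ℕ × ℕ)) : Prop := ∀ ⦃i j⦄, (i, j) ∈ H → (j, i) ∈ H

/-- `H` is a transitive relation. -/
def IsTransRel (H : Set (ℕ × ℕ)) : Prop :=
  ∀ ⦃i j k⦄, (i, j) ∈ H → (j, k) ∈ H → (i, k) ∈ H

/-- A relation on ℕ is decidable if membership in it is a computable predicate. -/
def DecidableRelSet (R : Set (ℕ × ℕ)) : Prop :=
  ComputablePred (fun p : ℕ × ℕ => p ∈ R)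

/-- `ν : ℕ₊ → ℕ × ℕ` (modelled as a function on ℕ, restricted to positive
arguments) is an enumeration of `R`: a computable function whose range (over
positive arguments) is `R`. -/
def IsEnumeration (ν : ℕ → ℕ × ℕ) (R : Set (ℕ × ℕ)) : Prop :=
  Computable ν ∧ R = {e | ∃ n, 1 ≤ n ∧ ν n = e}

/-- A relation on ℕ is semi-decidable (computably enumerable) if it is the
range of a computable function `ν : ℕ₊ → ℕ × ℕ`. -/
def SemiDecidableRel (R : Set (ℕ × ℕ)) : Prop := ∃ ν, IsEnumeration ν R

/-- A subset of ℕ is semi-decidable (computably enumerable) if it is the range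
of a computable function on positive arguments. -/
def SemiDecidableSet (A : Set ℕ) : Prop :=
  ∃ f : ℕ → ℕ, Computable f ∧ A = {a | ∃ n, 1 ≤ n ∧ f n = a}

/-- `E` is IC: every equivalence class `[i]_E = {j | (i,j) ∈ E}` is infinite. -/
def IC (E : Set (ℕ × ℕ)) : Prop := ∀ i, {j | (i, j) ∈ E}.Infinite

/-- `E` is FC: every equivalence class `[i]_E = {j | (i,j) ∈ E}` is finite. -/
def FC (E : Set (ℕ × ℕ)) : Prop := ∀ i, {j | (i, j) ∈ E}.Finite

/-- Composition of relations: `RS = {(i,k) | ∃ j, (i,j) ∈ R ∧ (j,k) ∈ S}`. -/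
def relComp (R S : Set (ℕ × ℕ)) : Set (ℕ × ℕ) :=
  {p | ∃ j, (p.1, j) ∈ R ∧ (j, p.2) ∈ S}

/-- Converse relation: `R⁻¹ = {(j,i) | (i,j) ∈ R}`. -/
def relInv (R : Set (ℕ × ℕ)) : Set (ℕ × ℕ) := {p | (p.2, p.1) ∈ R}

/-- Transitive closure of a relation, `tc R = ⋃_{n ≥ 1} Rⁿ`. -/
def tc (R : Set (ℕ × ℕ)) : Set (ℕ × ℕ) :=
  {p | Relation.TransGen (fun i j => (i, j) ∈ R) p.1 p.2}

/-- `ξ` is a coding of the enumeration `ν` (with `π = ν ∘ ξ`):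
a computable `ξ : ℕ₊ → ℕ₊` such that `1 < ξ(1)`, `π₁(π(1)) = π₁(ν(1))`,
`max {1, π₁(ν(1))} < π₂(π(1))`, and for every `n ≥ 1`: `ξ(n) < ξ(n+1)`,
`π₁(ν(ξ(n+1))) = π₁(ν(n+1))`, and
`max {π₁(π(n+1)), π₂(π(n))} < π₂(π(n+1))`. -/
def IsCoding (ν : ℕ → ℕ × ℕ) (ξ : ℕ → ℕ) : Prop :=
  Computable ξ ∧
  1 < ξ 1 ∧ (ν (ξ 1)).1 = (ν 1).1 ∧ max 1 (ν 1).1 < (ν (ξ 1)).2 ∧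
  ∀ n, 1 ≤ n →
    ξ n < ξ (n + 1) ∧ (ν (ξ (n + 1))).1 = (ν (n + 1)).1 ∧
    max (ν (ξ (n + 1))).1 (ν (ξ n)).2 < (ν (ξ (n + 1))).2

/-- `R_ξ = {π(n) | n ∈ ℕ₊}` where `π = ν ∘ ξ`. -/
def Rcod (ν : ℕ → ℕ × ℕ) (ξ : ℕ → ℕ) : Set (ℕ × ℕ) :=
  {e | ∃ n, 1 ≤ n ∧ ν (ξ n) = e}

/-- `S_ξ = {(π₂(π(m)), π₂(π(n))) | m, n ∈ ℕ₊ and ν(n) = (ν(m))⁻¹}`. -/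
def Scod (ν : ℕ → ℕ × ℕ) (ξ : ℕ → ℕ) : Set (ℕ × ℕ) :=
  {e | ∃ m, 1 ≤ m ∧ ∃ n, 1 ≤ n ∧ ν n = ((ν m).2, (ν m).1) ∧
    e = ((ν (ξ m)).2, (ν (ξ n)).2)}

/-- `T_ξ = {(π₂(π(m)), π₂(π(n))) | m, n ∈ ℕ₊ and ν(n) = ν(m)}`. -/
def Tcod (ν : ℕ → ℕ × ℕ) (ξ : ℕ → ℕ) : Set (ℕ × ℕ) :=
  {e | ∃ m, 1 ≤ m ∧ ∃ n, 1 ≤ n ∧ ν n = ν m ∧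
    e = ((ν (ξ m)).2, (ν (ξ n)).2)}

/-- The identity relation `I = {(n,n) | n ∈ ℕ}`. -/
def diagRel : Set (ℕ × ℕ) := {p | p.1 = p.2}

/-- The field of a relation: `F(H) = {i | ∃ j, (i,j) ∈ H ∨ (j,i) ∈ H}`. -/
def fld (H : Set (ℕ × ℕ)) : Set ℕ := {i | ∃ j, (i, j) ∈ H ∨ (j, i) ∈ H}

/-!
Let `ν` be an injective computable function whose range is undecidable. Take two disjoint copies of
the codomain of `ν`, and one connecting vertex for each argument `s`. Merging every connecting
vertex `s` with the left copy of `ν s` is a decidable identification, and so is merging it with the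
right copy of `ν s`. Doing both joins the two copies of `a` exactly when `a` lies in the range of
`ν`, so the join is undecidable, while each of its classes has at most three elements. Every vertex
of a nontrivial class is merged directly with some connecting vertex of the class by one of the two
identifications, which is why the composition `FGF` already exhausts the join.
-/

open Nat.Partrec (Code)

section Relations

variable {F G R S E : Set (ℕ × ℕ)}

theorem tc_subset (hE : IsTransRel E) (hRE : R ⊆ E) : tc R ⊆ E := by
  have : IsTrans ℕ fun i j => (i, j) ∈ E := ⟨fun _ _ _ hij hjk => hE hij hjk⟩
  have hle : (fun i j => (i, j) ∈ R) ≤ fun i j => (i, j) ∈ E := fun _ _ h => hRE h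
  exact fun p hp => Relation.transGen_minimal hle p.1 p.2 hp

theorem relComp_relComp_subset_tc_union : relComp (relComp F G) F ⊆ tc (F ∪ G) := by
  rintro p ⟨v, ⟨u, hF, hG⟩, hF'⟩
  have hpu : (p.1, u) ∈ F ∪ G := Or.inl hF
  have huv : (u, v) ∈ F ∪ G := Or.inr hG
  have hvp : (v, p.2) ∈ F ∪ G := Or.inl hF'
  exact .tail (.tail (.single hpu) huv) hvp

theorem tc_union_eq_of_subset_relComp (hE : IsTransRel E) (hFE : F ⊆ E) (hGE : G ⊆ E)
    (h : E ⊆ relComp (relComp F G) F) :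
    tc (F ∪ G) = E ∧ tc (F ∪ G) = relComp (relComp F G) F := by
  have htc : tc (F ∪ G) ⊆ E := tc_subset hE (Set.union_subset hFE hGE)
  exact ⟨htc.antisymm (h.trans relComp_relComp_subset_tc_union),
    (htc.trans h).antisymm relComp_relComp_subset_tc_union⟩

theorem semiDecidableRel_iff_exists_range_eq :
    SemiDecidableRel R ↔ ∃ ν : ℕ → ℕ × ℕ, Computable ν ∧ Set.range ν = R := by
  constructor
  · rintro ⟨ν, hν, rfl⟩
    refine ⟨fun n => ν (n + 1), hν.comp Computable.succ, Set.Subset.antisymm ?_ ?_⟩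
    · rintro _ ⟨n, rfl⟩
      exact ⟨n + 1, Nat.le_add_left 1 n, rfl⟩
    · rintro _ ⟨n, hn, rfl⟩
      exact ⟨n - 1, congrArg ν (Nat.sub_add_cancel hn)⟩
  · rintro ⟨ν, hν, rfl⟩
    refine ⟨fun n => ν n.pred, hν.comp Computable.pred, Set.Subset.antisymm ?_ ?_⟩
    · rintro _ ⟨n, rfl⟩
      exact ⟨n + 1, Nat.le_add_left 1 n, rfl⟩
    · rintro _ ⟨n, -, rfl⟩
      exact ⟨n.pred, rfl⟩

theorem semiDecidableRel_of_computable_option {γ : Type*} [Primcodable γ]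
    {f : γ → Option (ℕ × ℕ)} (hf : Computable f) (hR : R.Nonempty)
    (mem_iff : ∀ e, e ∈ R ↔ ∃ c, f c = some e) : SemiDecidableRel R := by
  obtain ⟨e₀, he₀⟩ := hR
  refine semiDecidableRel_iff_exists_range_eq.2
    ⟨fun n => ((Encodable.decode n).bind f).getD e₀,
      Computable.option_getD
        (Computable.option_bind Computable.decode (hf.comp Computable.snd).to₂)
        (Computable.const e₀),
      Set.Subset.antisymm ?_ ?_⟩
  · rintro _ ⟨n, rfl⟩
    dsimp only
    cases hn : (Encodable.decode n).bind f with
    | none => exact he₀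
    | some e =>
      obtain ⟨c, -, hc⟩ := Option.bind_eq_some_iff.1 hn
      exact (mem_iff e).2 ⟨c, hc⟩
  · intro e he
    obtain ⟨c, hc⟩ := (mem_iff e).1 he
    exact ⟨Encodable.encode c, by simp [hc]⟩

theorem DecidableRelSet.semiDecidableRel (hR : DecidableRelSet R) (hne : R.Nonempty) :
    SemiDecidableRel R := by
  classical
  have hf : Computable fun e : ℕ × ℕ => if e ∈ R then some e else none :=
    (Computable.cond hR.decide Computable.option_some (Computable.const none)).of_eq
      fun e => by simp [Bool.cond_decide]
  exact semiDecidableRel_of_computable_option hf hne fun e => by simp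

theorem SemiDecidableRel.relComp (hR : SemiDecidableRel R) (hS : SemiDecidableRel S)
    (hne : (relComp R S).Nonempty) : SemiDecidableRel (relComp R S) := by
  obtain ⟨ν, hν, rfl⟩ := semiDecidableRel_iff_exists_range_eq.1 hR
  obtain ⟨μ, hμ, rfl⟩ := semiDecidableRel_iff_exists_range_eq.1 hS
  have hν' : Computable fun c : ℕ × ℕ => ν c.1 := hν.comp Computable.fst
  have hμ' : Computable fun c : ℕ × ℕ => μ c.2 := hμ.comp Computable.snd
  have hf : Computable fun c : ℕ × ℕ =>
      if (ν c.1).2 = (μ c.2).1 then some ((ν c.1).1, (μ c.2).2) else none :=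
    (Computable.cond
      (Primrec.eq.decide.to_comp.comp (Computable.snd.comp hν') (Computable.fst.comp hμ'))
      (Computable.option_some.comp ((Computable.fst.comp hν').pair (Computable.snd.comp hμ')))
      (Computable.const none)).of_eq fun c => by simp [Bool.cond_decide]
  refine semiDecidableRel_of_computable_option hf hne fun ⟨i, k⟩ => ?_
  simp only [Option.ite_none_right_eq_some, Option.some.injEq, Prod.mk.injEq]
  constructor
  · rintro ⟨j, ⟨m, hm⟩, ⟨n, hn⟩⟩
    exact ⟨(m, n), by simp [hm, hn]⟩
  · rintro ⟨⟨m, n⟩, hmn, rfl, rfl⟩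
    exact ⟨(ν m).2, ⟨m, rfl⟩, ⟨n, Prod.ext hmn.symm rfl⟩⟩

end Relations

section RecursivelyEnumerable

variable {α : Type*} [Primcodable α] {p : α → Prop}

theorem exists_computable_monotone_approximation (hp : REPred p) :
    ∃ D : α → ℕ → Bool, Computable₂ D ∧ (∀ a, Monotone (D a)) ∧ (∀ a, D a 0 = false) ∧
      ∀ a, p a ↔ ∃ s, D a s = true := by
  obtain ⟨c, hc⟩ := Code.exists_code.1 hp
  have eval_dom_iff : ∀ a, (c.eval (Encodable.encode a)).Dom ↔ p a := by
    intro a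
    simp [hc, Part.assert]
  refine ⟨fun a s => (c.evaln s (Encodable.encode a)).isSome, ?_, ?_, ?_, ?_⟩
  · exact (Primrec.option_isSome.comp (Code.primrec_evaln.comp
      ((Primrec.snd.pair (Primrec.const c)).pair (Primrec.encode.comp Primrec.fst)))).to_comp
  · intro a s t hst
    refine Bool.le_iff_imp.2 fun hs => ?_
    obtain ⟨x, hx⟩ := Option.isSome_iff_exists.1 hs
    exact Option.isSome_iff_exists.2 ⟨x, Code.evaln_mono hst hx⟩
  · intro a
    simp [Code.evaln]
  · intro a
    simp only [← eval_dom_iff, Part.dom_iff_mem, Code.evaln_complete, Option.isSome_iff_exists,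
      Option.mem_def]
    exact exists_comm

theorem exists_computable_unique_witness (hp : REPred p) :
    ∃ T : α → ℕ → Bool, Computable₂ T ∧ (∀ a, p a ↔ ∃ s, T a s = true) ∧
      ∀ a s t, T a s = true → T a t = true → s = t := by
  obtain ⟨D, hD, hmono, hzero, hpD⟩ := exists_computable_monotone_approximation hp
  -- A monotone Boolean sequence jumps from `false` to `true` at most once.
  refine ⟨fun a s => !D a s && D a (s + 1), ?_, ?_, ?_⟩
  · exact Primrec.and.to_comp.comp (Primrec.not.to_comp.comp hD)
      (hD.comp Computable.fst (Computable.succ.comp Computable.snd))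
  · intro a
    rw [hpD]
    constructor
    · intro h
      obtain ⟨s, hs, hs'⟩ := Nat.exists_not_and_succ_of_not_zero_of_exists (by simp [hzero]) h
      exact ⟨s, by simp [hs, hs']⟩
    · rintro ⟨s, hs⟩
      exact ⟨s + 1, (Bool.and_eq_true_iff.1 hs).2⟩
  · have not_lt_of_jumps : ∀ a s t, (!D a s && D a (s + 1)) = true →
        (!D a t && D a (t + 1)) = true → ¬s < t := by
      intro a s t hs ht hst
      have hDt : D a (s + 1) = true → D a t = true :=
        Bool.le_iff_imp.1 (hmono a (Nat.succ_le_of_lt hst))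
      simp_all
    intro a s t hs ht
    exact le_antisymm (Nat.not_lt.1 (not_lt_of_jumps a t s ht hs))
      (Nat.not_lt.1 (not_lt_of_jumps a s t hs ht))

theorem exists_injective_computable_mem_range_iff (hp : REPred p) :
    ∃ ν : α × ℕ → α ⊕ α × ℕ, Function.Injective ν ∧ Computable ν ∧
      ∀ a, Sum.inl a ∈ Set.range ν ↔ p a := by
  obtain ⟨T, hT, hpT, hunique⟩ := exists_computable_unique_witness hp
  refine ⟨fun c => bif T c.1 c.2 then Sum.inl c.1 else Sum.inr c, ?_, ?_, ?_⟩
  · rintro ⟨a, s⟩ ⟨b, t⟩ h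
    cases hs : T a s <;> cases ht : T b t <;>
      simp only [hs, ht, cond_true, cond_false, reduceCtorEq, Sum.inl.injEq, Sum.inr.injEq] at h
    · exact h
    · subst h
      rw [hunique a s t hs ht]
  · exact Computable.cond hT (Computable.sumInl.comp Computable.fst) Computable.sumInr
  · intro a
    rw [hpT]
    constructor
    · rintro ⟨⟨b, s⟩, h⟩
      cases hs : T b s <;> simp only [hs, cond_true, cond_false, reduceCtorEq, Sum.inl.injEq] at h
      exact h ▸ ⟨s, hs⟩
    · rintro ⟨s, hs⟩
      exact ⟨(a, s), by simp [hs]⟩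

theorem exists_injective_computable_not_computablePred_range :
    ∃ ν : ℕ → ℕ, Function.Injective ν ∧ Computable ν ∧ ¬ComputablePred (· ∈ Set.range ν) := by
  obtain ⟨ν, hinj, hν, hmem⟩ :=
    exists_injective_computable_mem_range_iff (ComputablePred.halting_problem_re 0)
  refine ⟨fun n => Encodable.encode (ν (Denumerable.ofNat (Code × ℕ) n)),
    Encodable.encode_injective.comp (hinj.comp (Denumerable.eqv (Code × ℕ)).symm.injective),
    Computable.encode.comp (hν.comp (Computable.ofNat _)), fun hrange => ?_⟩
  refine ComputablePred.halting_problem 0 (ComputablePred.computable_of_manyOneReducible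
    ⟨fun c => Encodable.encode (Sum.inl c : Code ⊕ Code × ℕ),
      Computable.encode.comp Computable.sumInl, fun c => ?_⟩ hrange)
  refine (hmem c).symm.trans ?_
  simp only [Set.mem_range, Encodable.encode_inj]
  exact (Denumerable.eqv (Code × ℕ)).symm.surjective.exists

end RecursivelyEnumerable

theorem computable_sumElim {α β γ : Type*} [Primcodable α] [Primcodable β] [Primcodable γ]
    {f : α → γ} {g : β → γ} (hf : Computable f) (hg : Computable g) : Computable (Sum.elim f g) :=
  (Computable.sumCasesOn Computable.id (hf.comp Computable.snd).to₂
    (hg.comp Computable.snd).to₂).of_eq fun x => by cases x <;> rfl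

section CodeRel

variable {V : Type*} [Denumerable V]

/-- An equivalence relation on a denumerable type `V`, read as a relation on the codes of the
elements of `V`. -/
def codeRel (r : Setoid V) : Set (ℕ × ℕ) :=
  {p | r (Denumerable.ofNat V p.1) (Denumerable.ofNat V p.2)}

theorem isEquivRel_codeRel (r : Setoid V) : IsEquivRel (codeRel r) :=
  ⟨fun _ => r.refl' _, fun _ _ => r.symm', fun _ _ _ => r.trans'⟩

theorem codeRel_mono {r s : Setoid V} (h : r ≤ s) : codeRel r ⊆ codeRel s :=
  fun _ hp => h hp

theorem fc_codeRel {r : Setoid V} (hr : ∀ x, {y | r x y}.Finite) : FC (codeRel r) := fun i =>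
  Set.Finite.preimage (f := Denumerable.ofNat V) (Denumerable.eqv V).symm.injective.injOn
    (hr (Denumerable.ofNat V i))

theorem decidableRelSet_codeRel_ker {β : Type*} [Primcodable β] {f : V → β}
    (hf : Computable f) : DecidableRelSet (codeRel (Setoid.ker f)) := by
  classical
  have hcode : Computable fun i => f (Denumerable.ofNat V i) := hf.comp (Computable.ofNat V)
  have : Computable fun p : ℕ × ℕ =>
      decide (f (Denumerable.ofNat V p.1) = f (Denumerable.ofNat V p.2)) :=
    Primrec.eq.decide.to_comp.comp (hcode.comp Computable.fst) (hcode.comp Computable.snd)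
  exact this.computablePred

theorem codeRel_subset_relComp {r s t : Setoid V}
    (h : ∀ ⦃x y⦄, t x y → ∃ u v, r x u ∧ s u v ∧ r v y) :
    codeRel t ⊆ relComp (relComp (codeRel r) (codeRel s)) (codeRel r) := by
  rintro ⟨i, k⟩ hik
  obtain ⟨u, v, hiu, huv, hvk⟩ := h hik
  refine ⟨Encodable.encode v, ⟨Encodable.encode u, ?_, ?_⟩, ?_⟩ <;>
    simpa [codeRel]

end CodeRel

section Gluing

variable {α σ : Type*} {ν : σ → α}

variable (ν) in
/-- The map on two copies of `α` (the two summands of `α ⊕ α`) and one connecting vertex for each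
`s : σ` that sends `s` to the left copy of `ν s` and fixes both copies of `α`. Its kernel is the
first of the two identifications to be joined. -/
def attachLeft : (α ⊕ α) ⊕ σ → α ⊕ α := Sum.elim id (Sum.inl ∘ ν)

variable (ν) in
/-- The counterpart of `attachLeft` that sends each connecting vertex `s` to the right copy of
`ν s`. -/
def attachRight : (α ⊕ α) ⊕ σ → α ⊕ α := Sum.elim id (Sum.inr ∘ ν)

variable (ν) in
/-- The element of `α` that a vertex lies over: a connecting vertex `s` lies over `ν s`. -/
def basePoint : (α ⊕ α) ⊕ σ → α := Sum.elim (Sum.elim id id) ν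

variable (ν) in
/-- The join of the kernels of `attachLeft ν` and `attachRight ν`, given explicitly: all vertices
over the same element of `α` are related, provided that some connecting vertex lies over it. -/
def glued : Setoid ((α ⊕ α) ⊕ σ) where
  r x y := x = y ∨ basePoint ν x = basePoint ν y ∧ basePoint ν x ∈ Set.range ν
  iseqv :=
    { refl := fun _ => Or.inl rfl
      symm := by grind
      trans := by grind }

theorem glued_def {x y : (α ⊕ α) ⊕ σ} :
    glued ν x y ↔ x = y ∨ basePoint ν x = basePoint ν y ∧ basePoint ν x ∈ Set.range ν := Iff.rfl

theorem ker_attachLeft_le_glued : Setoid.ker (attachLeft ν) ≤ glued ν := by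
  rintro ((a | a) | s) ((b | b) | t) h <;>
    simp_all [Setoid.ker_def, attachLeft, glued_def, basePoint, eq_comm]

theorem ker_attachRight_le_glued : Setoid.ker (attachRight ν) ≤ glued ν := by
  rintro ((a | a) | s) ((b | b) | t) h <;>
    simp_all [Setoid.ker_def, attachRight, glued_def, basePoint, eq_comm]

theorem attach_eq_of_basePoint_eq {x : (α ⊕ α) ⊕ σ} {s : σ} (hx : basePoint ν x = ν s) :
    attachLeft ν x = attachLeft ν (Sum.inr s) ∨ attachRight ν x = attachRight ν (Sum.inr s) := by
  rcases x with (a | a) | t <;> simp_all [attachLeft, attachRight, basePoint]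

theorem exists_attach_of_glued ⦃x y : (α ⊕ α) ⊕ σ⦄ (h : glued ν x y) :
    ∃ u v, Setoid.ker (attachLeft ν) x u ∧ Setoid.ker (attachRight ν) u v ∧
      Setoid.ker (attachLeft ν) v y := by
  rcases h with rfl | ⟨hxy, s, hs⟩
  · exact ⟨x, x, rfl, rfl, rfl⟩
  · rcases attach_eq_of_basePoint_eq hs.symm with hx | hx <;>
      rcases attach_eq_of_basePoint_eq (hxy.symm.trans hs.symm) with hy | hy
    · exact ⟨y, y, hx.trans hy.symm, rfl, rfl⟩
    · exact ⟨Sum.inr s, y, hx, hy.symm, rfl⟩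
    · exact ⟨x, Sum.inr s, rfl, hx, hy.symm⟩
    · exact ⟨x, y, rfl, hx.trans hy.symm, rfl⟩

theorem glued_copies_iff {a : α} :
    glued ν (Sum.inl (Sum.inl a)) (Sum.inl (Sum.inr a)) ↔ a ∈ Set.range ν := by
  simp [glued_def, basePoint]

theorem finite_setOf_glued (hν : ∀ a, (ν ⁻¹' {a}).Finite) (x : (α ⊕ α) ⊕ σ) :
    {y | glued ν x y}.Finite := by
  have hcover : {y | glued ν x y} ⊆
      {Sum.inl (Sum.inl (basePoint ν x)), Sum.inl (Sum.inr (basePoint ν x))} ∪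
        Sum.inr '' (ν ⁻¹' {basePoint ν x}) := by
    rintro y (rfl | ⟨hxy, -⟩)
    · rcases x with (a | a) | s <;> simp [basePoint]
    · rcases y with (a | a) | s <;> simp_all [basePoint]
  exact ((Set.toFinite _).union ((hν _).image _)).subset hcover

theorem range_manyOneReducible_codeRel_glued [Denumerable α] [Denumerable σ] :
    ManyOneReducible (· ∈ Set.range ν) (· ∈ codeRel (glued ν)) := by
  refine ⟨fun a => (Encodable.encode (Sum.inl (Sum.inl a) : (α ⊕ α) ⊕ σ),
    Encodable.encode (Sum.inl (Sum.inr a) : (α ⊕ α) ⊕ σ)), ?_, fun a => ?_⟩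
  · exact (Computable.encode.comp (Computable.sumInl.comp Computable.sumInl)).pair
      (Computable.encode.comp (Computable.sumInl.comp Computable.sumInr))
  · simp only [codeRel, Set.mem_ofPred_eq, Denumerable.ofNat_encode]
    exact glued_copies_iff.symm

theorem tc_union_codeRel_ker_attach [Denumerable α] [Denumerable σ] :
    let F := codeRel (Setoid.ker (attachLeft ν))
    let G := codeRel (Setoid.ker (attachRight ν))
    tc (F ∪ G) = codeRel (glued ν) ∧ tc (F ∪ G) = relComp (relComp F G) F :=
  tc_union_eq_of_subset_relComp (isEquivRel_codeRel _).2.2 (codeRel_mono ker_attachLeft_le_glued)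
    (codeRel_mono ker_attachRight_le_glued) (codeRel_subset_relComp exists_attach_of_glued)

end Gluing

theorem stmt_4 :
    ∃ F G : Set (ℕ × ℕ),
      IsEquivRel F ∧ IsEquivRel G ∧ DecidableRelSet F ∧ DecidableRelSet G ∧
      IsEquivRel (tc (F ∪ G)) ∧ SemiDecidableRel (tc (F ∪ G)) ∧ FC (tc (F ∪ G)) ∧
      ¬ DecidableRelSet (tc (F ∪ G)) ∧
      tc (F ∪ G) = relComp (relComp F G) F := by
  obtain ⟨ν, hinj, hν, hundec⟩ := exists_injective_computable_not_computablePred_range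
  let F := codeRel (Setoid.ker (attachLeft ν))
  let G := codeRel (Setoid.ker (attachRight ν))
  have hF : DecidableRelSet F :=
    decidableRelSet_codeRel_ker (computable_sumElim Computable.id (Computable.sumInl.comp hν))
  have hG : DecidableRelSet G :=
    decidableRelSet_codeRel_ker (computable_sumElim Computable.id (Computable.sumInr.comp hν))
  obtain ⟨htc, hcomp⟩ : tc (F ∪ G) = codeRel (glued ν) ∧ tc (F ∪ G) = relComp (relComp F G) F :=
    tc_union_codeRel_ker_attach
  have hsemi : SemiDecidableRel (relComp (relComp F G) F) :=
    ((hF.semiDecidableRel ⟨(0, 0), rfl⟩).relComp (hG.semiDecidableRel ⟨(0, 0), rfl⟩)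
      ⟨(0, 0), 0, rfl, rfl⟩).relComp (hF.semiDecidableRel ⟨(0, 0), rfl⟩)
      ⟨(0, 0), 0, ⟨0, rfl, rfl⟩, rfl⟩
  refine ⟨F, G, isEquivRel_codeRel _, isEquivRel_codeRel _, hF, hG, ?_, hcomp ▸ hsemi, ?_, ?_,
    hcomp⟩
  all_goals rw [htc]
  · exact isEquivRel_codeRel _
  · exact fc_codeRel (finite_setOf_glued fun a => (Set.finite_singleton a).preimage hinj.injOn)
  · exact fun hdec => hundec
      (ComputablePred.computable_of_manyOneReducible range_manyOneReducible_codeRel_glued hdec)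
end

section
/- There is a semi-decidable equivalence relation E on ℕ, with every equivalence class finite (FC), such that: (a) there do not exist n > 1 and decidable equivalence relations H₁, …, Hₙ on ℕ with E equal to the lattice join H₁ ∨ ⋯ ∨ Hₙ (the transitive closure of H₁ ∪ ⋯ ∪ Hₙ); and (b) there do not exist n > 1 and decidable equivalence relations H₁, …, Hₙ on ℕ (not necessarily distinct) with E = H₁ ⋯ Hₙ (their composition). -/
/-!
Let `A ⊆ ℕ` be recursively enumerable but not computable, and glue `2i` to `2i + 1` exactly when
`i ∈ A`. A relation `U` contained in this gluing can leave `2i` only by going to `2i + 1`, so if the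
transitive closure of `U` is the gluing, then `i ∈ A ↔ (2i, 2i + 1) ∈ U`, and `U` cannot be
decidable. Joins are transitive closures of finite unions of decidable relations; a composition of
reflexive relations which happens to be transitive is the transitive closure of their union too.
-/

section REPred

variable {α β : Type*} [Primcodable α] [Primcodable β] {p q : α → Prop}

theorem rePred_comp {f : β → α} (hp : REPred p) (hf : Computable f) : REPred fun b => p (f b) :=
  Partrec.comp hp hf

theorem rePred_or (hp : REPred p) (hq : REPred q) : REPred fun a => p a ∨ q a := by
  obtain ⟨k, hk, hdom⟩ := Partrec.merge' hp hq
  exact hk.dom_re.of_eq fun a => by simpa [Part.assert] using (hdom a).2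

theorem rePred_and (hp : REPred p) (hq : REPred q) : REPred fun a => p a ∧ q a :=
  (Partrec.bind hp (Partrec.comp hq Computable.fst).to₂).dom_re.of_eq fun a => by
    simp [Part.assert]

theorem exists_primrecPred_iff_exists_of_rePred (hp : REPred p) :
    ∃ r : α × ℕ → Prop, PrimrecPred r ∧ ∀ a, p a ↔ ∃ k, r (a, k) := by
  obtain ⟨c, hc⟩ := Nat.Partrec.Code.exists_code.1 hp
  have hrun : Primrec fun x : α × ℕ => c.evaln x.2 (Encodable.encode x.1) :=
    Nat.Partrec.Code.primrec_evaln.comp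
      ((Primrec.snd.pair (Primrec.const c)).pair (Primrec.encode.comp Primrec.fst))
  refine ⟨fun x => (c.evaln x.2 (Encodable.encode x.1)).isSome = true,
    Primrec.eq.comp (Primrec.option_isSome.comp hrun) (Primrec.const true), fun a => ?_⟩
  have hdom : p a ↔ (c.eval (Encodable.encode a)).Dom := by simp [hc, Part.assert]
  simp only [hdom, Part.dom_iff_mem, Nat.Partrec.Code.evaln_complete, Option.isSome_iff_exists,
    Option.mem_def]
  exact exists_comm

theorem exists_computable_range_eq_of_rePred (hp : REPred p) (hne : ∃ a, p a) :
    ∃ f : ℕ → α, Computable f ∧ Set.range f = {a | p a} := by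
  obtain ⟨a₀, ha₀⟩ := hne
  obtain ⟨r, ⟨_, hr⟩, hpr⟩ := exists_primrecPred_iff_exists_of_rePred hp
  let d (m : ℕ) : α × ℕ := (Encodable.decode m).getD (a₀, 0)
  let g (x : α × ℕ) : α := if r x then x.1 else a₀
  have hd : Primrec d := Primrec.option_getD.comp Primrec.decode (Primrec.const (a₀, 0))
  have hg : Primrec g := Primrec.ite ⟨_, hr⟩ Primrec.fst (Primrec.const a₀)
  have hd_surj : Function.Surjective d := fun x => ⟨Encodable.encode x, by
    simp only [d, Encodable.encodek, Option.getD_some]⟩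
  refine ⟨g ∘ d, (hg.comp hd).to_comp, ?_⟩
  rw [hd_surj.range_comp]
  ext a
  constructor
  · rintro ⟨x, rfl⟩
    by_cases hx : r x
    · simpa [g, hx] using (hpr x.1).2 ⟨x.2, hx⟩
    · simpa [g, hx] using ha₀
  · intro ha
    obtain ⟨k, hk⟩ := (hpr a).1 ha
    exact ⟨(a, k), if_pos hk⟩

theorem exists_rePred_not_computablePred :
    ∃ A : Set ℕ, REPred (· ∈ A) ∧ ¬ ComputablePred (· ∈ A) := by
  let A : Set ℕ := {i | ((Denumerable.ofNat Nat.Partrec.Code i).eval 0).Dom}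
  have hA : REPred (· ∈ A) :=
    rePred_comp (p := fun c : Nat.Partrec.Code => (c.eval 0).Dom)
      (ComputablePred.halting_problem_re 0) (Computable.ofNat Nat.Partrec.Code)
  have hreduce : (fun c : Nat.Partrec.Code => (c.eval 0).Dom) ≤₀ (· ∈ A) :=
    ⟨Encodable.encode, Computable.encode, fun c => by simp [A]⟩
  exact ⟨A, hA, fun h =>
    ComputablePred.halting_problem 0 (ComputablePred.computable_of_manyOneReducible hreduce h)⟩

end REPred

theorem semiDecidableRel_of_rePred {R : Set (ℕ × ℕ)} (hR : REPred (· ∈ R)) (hne : R.Nonempty) :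
    SemiDecidableRel R := by
  obtain ⟨f, hf, hrange⟩ := exists_computable_range_eq_of_rePred hR hne
  refine ⟨fun n => f n.pred, hf.comp Primrec.pred.to_comp, ?_⟩
  ext e
  constructor
  · intro he
    obtain ⟨n, rfl⟩ : e ∈ Set.range f := hrange ▸ he
    exact ⟨n + 1, n.succ_pos, rfl⟩
  · rintro ⟨n, -, rfl⟩
    exact hrange.subset ⟨n.pred, rfl⟩

section TransitiveClosure

variable {R T : Set (ℕ × ℕ)}

theorem subset_tc (R : Set (ℕ × ℕ)) : R ⊆ tc R :=
  fun _ he => Relation.TransGen.single he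

theorem isTransRel_tc (R : Set (ℕ × ℕ)) : IsTransRel (tc R) :=
  fun _ _ _ => Relation.TransGen.trans

theorem tc_subset_s6 (hRT : R ⊆ T) (hT : IsTransRel T) : tc R ⊆ T := by
  rintro ⟨i, j⟩ (hij : Relation.TransGen (fun i j => (i, j) ∈ R) i j)
  induction hij with
  | single h => exact hRT h
  | tail _ h ih => exact hT ih (hRT h)

theorem exists_ne_mem_of_mem_tc {i j : ℕ} (hij : (i, j) ∈ tc R) (hne : i ≠ j) :
    ∃ k, k ≠ i ∧ (i, k) ∈ R := by
  by_contra! hstay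
  have hsub : tc R ⊆ {e | e.1 = i → e.2 = i} := by
    refine tc_subset_s6 ?_ fun _ _ _ h₁ h₂ h => h₂ (h₁ h)
    rintro ⟨_, k⟩ hk rfl
    by_contra hki
    exact hstay k hki hk
  exact hne (hsub hij rfl).symm

end TransitiveClosure

theorem foldl_union_subset_iff {α : Type*} {H T : Set α} {l : List (Set α)} :
    l.foldl (· ∪ ·) H ⊆ T ↔ H ⊆ T ∧ ∀ K ∈ l, K ⊆ T := by
  induction l generalizing H with
  | nil => simp
  | cons K l ih => simp [ih, and_assoc]

theorem decidableRelSet_union {R S : Set (ℕ × ℕ)} (hR : DecidableRelSet R)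
    (hS : DecidableRelSet S) : DecidableRelSet (R ∪ S) := by
  obtain ⟨_, hR⟩ := hR
  obtain ⟨_, hS⟩ := hS
  refine ⟨fun p => decidable_of_iff (p ∈ R ∨ p ∈ S) Iff.rfl, ?_⟩
  exact (Primrec.or.to_comp.comp hR hS).of_eq fun p => by simp

section Fold

variable {H T : Set (ℕ × ℕ)} {l : List (Set (ℕ × ℕ))}

theorem decidableRelSet_foldl_union (hH : DecidableRelSet H) (hl : ∀ K ∈ l, DecidableRelSet K) :
    DecidableRelSet (l.foldl (· ∪ ·) H) :=
  List.foldlRecOn l _ hH fun _ hR K hK => decidableRelSet_union hR (hl K hK)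

theorem foldl_relComp_subset (hT : IsTransRel T) (hH : H ⊆ T) (hl : ∀ K ∈ l, K ⊆ T) :
    l.foldl relComp H ⊆ T := by
  refine List.foldlRecOn (motive := (· ⊆ T)) l relComp hH ?_
  rintro R hR K hK ⟨i, k⟩ ⟨j, hij, hjk⟩
  exact hT (hR hij) (hl K hK hjk)

theorem foldl_union_subset_foldl_relComp (hH : ∀ n, (n, n) ∈ H) (hl : ∀ K ∈ l, ∀ n, (n, n) ∈ K) :
    l.foldl (· ∪ ·) H ⊆ l.foldl relComp H := by
  rw [foldl_union_subset_iff]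
  induction l generalizing H with
  | nil => simp
  | cons K l ih =>
    obtain ⟨hK, hl⟩ := List.forall_mem_cons.1 hl
    obtain ⟨hfst, hrest⟩ := ih (H := relComp H K) (fun n => ⟨n, hH n, hK n⟩) hl
    have hH_sub : H ⊆ relComp H K := fun ⟨_, j⟩ hij => ⟨j, hij, hK j⟩
    have hK_sub : K ⊆ relComp H K := fun ⟨i, _⟩ hij => ⟨i, hH i, hij⟩
    exact ⟨hH_sub.trans hfst, List.forall_mem_cons.2 ⟨hK_sub.trans hfst, hrest⟩⟩

theorem tc_foldl_union_eq_foldl_relComp (hH : ∀ n, (n, n) ∈ H) (hl : ∀ K ∈ l, ∀ n, (n, n) ∈ K)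
    (htrans : IsTransRel (l.foldl relComp H)) :
    tc (l.foldl (· ∪ ·) H) = l.foldl relComp H := by
  obtain ⟨hH_sub, hl_sub⟩ := foldl_union_subset_iff.1 (subset_tc (l.foldl (· ∪ ·) H))
  exact (tc_subset_s6 (foldl_union_subset_foldl_relComp hH hl) htrans).antisymm
    (foldl_relComp_subset (isTransRel_tc _) hH_sub hl_sub)

end Fold

/-- The equivalence relation on `ℕ` whose classes are the pairs `{2i, 2i + 1}` for `i ∈ A`, all
other classes being singletons. It codes the set `A` into a relation with finite classes. -/
def glue (A : Set ℕ) : Set (ℕ × ℕ) :=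
  {e | e.1 = e.2 ∨ e.1 / 2 = e.2 / 2 ∧ e.1 / 2 ∈ A}

section Glue

variable {A : Set ℕ}

theorem mem_glue {i j : ℕ} : (i, j) ∈ glue A ↔ i = j ∨ i / 2 = j / 2 ∧ i / 2 ∈ A :=
  Iff.rfl

theorem two_mul_mem_glue_iff {i j : ℕ} :
    (2 * i, j) ∈ glue A ↔ j = 2 * i ∨ j = 2 * i + 1 ∧ i ∈ A := by
  have hdiv : 2 * i / 2 = i := by omega
  have hhalf : i = j / 2 ↔ j = 2 * i ∨ j = 2 * i + 1 := by omega
  rw [mem_glue, hdiv, hhalf]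
  tauto

theorem isEquivRel_glue (A : Set ℕ) : IsEquivRel (glue A) := by
  refine ⟨fun _ => Or.inl rfl, ?_, ?_⟩ <;> grind [mem_glue]

theorem fc_glue (A : Set ℕ) : FC (glue A) := fun i =>
  (Set.finite_Iic (i + 1)).subset fun j (hij : (i, j) ∈ glue A) => by
    rw [mem_glue] at hij
    rw [Set.mem_Iic]
    omega

theorem rePred_mem_glue (hA : REPred (· ∈ A)) : REPred (· ∈ glue A) := by
  have hhalf : Primrec fun n : ℕ => n / 2 := Primrec.nat_div.comp Primrec.id (Primrec.const 2)
  have heq : REPred fun e : ℕ × ℕ => e.1 = e.2 :=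
    (Primrec.eq.comp Primrec.fst Primrec.snd).computablePred.to_re
  have hhalf_eq : REPred fun e : ℕ × ℕ => e.1 / 2 = e.2 / 2 :=
    (Primrec.eq.comp (hhalf.comp Primrec.fst) (hhalf.comp Primrec.snd)).computablePred.to_re
  exact rePred_or heq (rePred_and hhalf_eq (rePred_comp hA (hhalf.comp Primrec.fst).to_comp))

theorem mem_iff_of_glue_eq_tc {U : Set (ℕ × ℕ)} (hU : glue A = tc U) (i : ℕ) :
    i ∈ A ↔ (2 * i, 2 * i + 1) ∈ U := by
  have hU_sub : U ⊆ glue A := hU ▸ subset_tc U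
  constructor
  · intro hi
    have hpath : (2 * i, 2 * i + 1) ∈ tc U := hU ▸ two_mul_mem_glue_iff.2 (Or.inr ⟨rfl, hi⟩)
    obtain ⟨k, hk, hik⟩ := exists_ne_mem_of_mem_tc hpath (by omega)
    obtain rfl : k = 2 * i + 1 := ((two_mul_mem_glue_iff.1 (hU_sub hik)).resolve_left hk).1
    exact hik
  · intro hi
    exact ((two_mul_mem_glue_iff.1 (hU_sub hi)).resolve_left (by omega)).2

theorem computablePred_of_glue_eq_tc {U : Set (ℕ × ℕ)} (hdec : DecidableRelSet U)
    (hU : glue A = tc U) : ComputablePred (· ∈ A) := by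
  have hdouble : Primrec fun i : ℕ => 2 * i := Primrec.nat_mul.comp (Primrec.const 2) Primrec.id
  have hreduce : (· ∈ A) ≤₀ (· ∈ U) :=
    ⟨fun i => (2 * i, 2 * i + 1), (hdouble.pair (Primrec.succ.comp hdouble)).to_comp,
      mem_iff_of_glue_eq_tc hU⟩
  exact ComputablePred.computable_of_manyOneReducible hreduce hdec

end Glue

theorem stmt_6_general :
    ∃ E : Set (ℕ × ℕ), IsEquivRel E ∧ SemiDecidableRel E ∧ FC E ∧
      (∀ U, DecidableRelSet U → E ≠ tc U) ∧
      ∀ (H : Set (ℕ × ℕ)) (l : List (Set (ℕ × ℕ))),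
        ((∀ n, (n, n) ∈ H) ∧ DecidableRelSet H) →
        (∀ K ∈ l, (∀ n, (n, n) ∈ K) ∧ DecidableRelSet K) →
        E ≠ l.foldl relComp H := by
  obtain ⟨A, hA, hA_not⟩ := exists_rePred_not_computablePred
  have hE := isEquivRel_glue A
  have hjoin (U) (hU : DecidableRelSet U) : glue A ≠ tc U :=
    fun h => hA_not (computablePred_of_glue_eq_tc hU h)
  refine ⟨glue A, hE, semiDecidableRel_of_rePred (rePred_mem_glue hA) ⟨(0, 0), hE.1 0⟩,
    fc_glue A, hjoin, fun H l hH hl hcomp => ?_⟩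
  refine hjoin _ (decidableRelSet_foldl_union hH.2 fun K hK => (hl K hK).2) ?_
  rw [tc_foldl_union_eq_foldl_relComp hH.1 (fun K hK => (hl K hK).1) (hcomp ▸ hE.2.2), hcomp]

theorem stmt_6 :
    ∃ E : Set (ℕ × ℕ), IsEquivRel E ∧ SemiDecidableRel E ∧ FC E ∧
      (¬ ∃ (H : Set (ℕ × ℕ)) (l : List (Set (ℕ × ℕ))), l ≠ [] ∧
        (IsEquivRel H ∧ DecidableRelSet H) ∧
        (∀ K ∈ l, IsEquivRel K ∧ DecidableRelSet K) ∧
        E = tc (l.foldl (· ∪ ·) H)) ∧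
      (¬ ∃ (H : Set (ℕ × ℕ)) (l : List (Set (ℕ × ℕ))), l ≠ [] ∧
        (IsEquivRel H ∧ DecidableRelSet H) ∧
        (∀ K ∈ l, IsEquivRel K ∧ DecidableRelSet K) ∧
        E = l.foldl relComp H) := by
  obtain ⟨E, hE, hsemi, hfc, hjoin, hcomp⟩ := stmt_6_general
  refine ⟨E, hE, hsemi, hfc, fun ⟨H, l, _, hH, hl, h⟩ => ?_, fun ⟨H, l, _, hH, hl, h⟩ => ?_⟩
  · exact hjoin _ (decidableRelSet_foldl_union hH.2 fun K hK => (hl K hK).2) h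
  · exact hcomp H l ⟨hH.1.1, hH.2⟩ (fun K hK => ⟨(hl K hK).1.1, (hl K hK).2⟩) h
end

section
/- If ξ is a coding of ν, an enumeration of an equivalence relation E on ℕ in which every equivalence class is infinite, then: T_ξ is decidable and T_ξ ⊆ E; S_ξ ∪ T_ξ is symmetric and transitive; S_ξ ∪ T_ξ ∪ I ⊆ E is an equivalence relation; and both S_ξ ∪ T_ξ and S_ξ ∪ T_ξ ∪ I are decidable relations. -/
/-!
List the numbers `c₁ < c₂ < …`, where `cₙ = π₂(π(n))`. Each `cₙ` is `E`-equivalent to `π₁(ν(n))`,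
which is itself equivalent to `π₂(ν(n))`. Both `T_ξ` and `S_ξ ∪ T_ξ` are push-forwards along
`n ↦ cₙ` of kernels of computable functions, namely of `ν` and of `n ↦ ν(n)` read as an unordered
pair. An injective push-forward keeps symmetry and transitivity, and since a strictly increasing
computable sequence has a computable left inverse, it keeps decidability too.
-/

section

variable {α β : Type*} [Primcodable α] [Primcodable β]

theorem computablePred_and {p q : α → Prop} :
    (hp : ComputablePred p) → (hq : ComputablePred q) → ComputablePred fun a => p a ∧ q a
  | ⟨_, hp⟩, ⟨_, hq⟩ =>
    Computable.computablePred <| Primrec.and.to_comp.comp hp hq |>.of_eq <| by simp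

theorem computablePred_or {p q : α → Prop} :
    (hp : ComputablePred p) → (hq : ComputablePred q) → ComputablePred fun a => p a ∨ q a
  | ⟨_, hp⟩, ⟨_, hq⟩ =>
    Computable.computablePred <| Primrec.or.to_comp.comp hp hq |>.of_eq <| by simp

theorem computablePred_eq {f g : α → β} (hf : Computable f) (hg : Computable g) :
    ComputablePred fun a => f a = g a :=
  ComputablePred.computable_of_manyOneReducible ⟨fun a => (f a, g a), hf.pair hg, fun _ => Iff.rfl⟩
    Primrec.eq.computablePred

theorem computablePred_mem_image {f : α → β} {g : β → α} (hf : Computable f) (hg : Computable g)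
    (hgf : Function.LeftInverse g f) {s : Set α} (hs : ComputablePred fun a => a ∈ s) :
    ComputablePred fun b => b ∈ f '' s := by
  have mem_image_iff (b : β) : f (g b) = b ∧ g b ∈ s ↔ b ∈ f '' s := by
    constructor
    · rintro ⟨hb, hs⟩
      exact ⟨g b, hs, hb⟩
    · rintro ⟨a, ha, rfl⟩
      simpa only [hgf a, true_and] using ha
  have mem_preimage : ComputablePred fun b => g b ∈ s :=
    ComputablePred.computable_of_manyOneReducible ⟨g, hg, fun _ => Iff.rfl⟩ hs
  exact (computablePred_and (computablePred_eq (hf.comp hg) .id) mem_preimage).of_eq mem_image_iff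

end

theorem exists_computable_leftInverse {f : ℕ → ℕ} (hf : Computable f) (hmono : StrictMono f) :
    ∃ g, Computable g ∧ Function.LeftInverse g f := by
  have exists_le (a : ℕ) : ∃ n, a ≤ f n := ⟨a, hmono.le_apply⟩
  have le_computable : ComputablePred fun p : ℕ × ℕ => p.1 ≤ f p.2 :=
    ComputablePred.computable_of_manyOneReducible
      ⟨fun p => (p.1, f p.2), Computable.fst.pair (hf.comp .snd), fun _ => Iff.rfl⟩
      Primrec.nat_le.computablePred
  refine ⟨fun a => Nat.find (exists_le a), .find le_computable exists_le, fun n => ?_⟩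
  simp only [Nat.find_eq_iff, hmono.le_iff_le, le_refl, not_le, imp_self, implies_true, and_self]

/-- The kernel `{(m, n) | g m = g n}` of a function on `ℕ`. -/
def kerRel {α : Type*} (g : ℕ → α) : Set (ℕ × ℕ) := {p | g p.1 = g p.2}

theorem isSymRel_kerRel {α : Type*} (g : ℕ → α) : IsSymRel (kerRel g) := fun _ _ => Eq.symm

theorem isTransRel_kerRel {α : Type*} (g : ℕ → α) : IsTransRel (kerRel g) := fun _ _ _ => Eq.trans

theorem decidableRelSet_kerRel {α : Type*} [Primcodable α] {g : ℕ → α} (hg : Computable g) :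
    DecidableRelSet (kerRel g) :=
  computablePred_eq (hg.comp .fst) (hg.comp .snd)

theorem decidableRelSet_diagRel : DecidableRelSet diagRel := decidableRelSet_kerRel Computable.id

theorem IsSymRel.image_prodMap {R : Set (ℕ × ℕ)} (hR : IsSymRel R) (f : ℕ → ℕ) :
    IsSymRel (Prod.map f f '' R) := by
  rintro _ _ ⟨⟨m, n⟩, hmn, ⟨⟩⟩
  exact ⟨(n, m), hR hmn, rfl⟩

theorem IsTransRel.image_prodMap {R : Set (ℕ × ℕ)} (hR : IsTransRel R) {f : ℕ → ℕ}
    (hf : Function.Injective f) : IsTransRel (Prod.map f f '' R) := by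
  rintro _ _ _ ⟨⟨l, m⟩, hlm, ⟨⟩⟩ ⟨⟨m', n⟩, hmn, heq⟩
  obtain ⟨hm, rfl⟩ := Prod.mk.inj heq
  obtain rfl := hf hm
  exact ⟨(l, n), hR hlm hmn, rfl⟩

theorem DecidableRelSet.image_prodMap {R : Set (ℕ × ℕ)} (hR : DecidableRelSet R) {f : ℕ → ℕ}
    (hf : Computable f) (hmono : StrictMono f) : DecidableRelSet (Prod.map f f '' R) := by
  obtain ⟨g, hg, hgf⟩ := exists_computable_leftInverse hf hmono
  have prodMap_computable {h : ℕ → ℕ} (hh : Computable h) : Computable (Prod.map h h) :=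
    (hh.comp .fst).pair (hh.comp .snd)
  exact computablePred_mem_image (prodMap_computable hf) (prodMap_computable hg)
    (hgf.prodMap hgf) hR

theorem IsEquivRel.diagRel_subset {E : Set (ℕ × ℕ)} (hE : IsEquivRel E) : diagRel ⊆ E := by
  rintro ⟨i, j⟩ (rfl : i = j)
  exact hE.1 i

theorem isEquivRel_union_diagRel {H : Set (ℕ × ℕ)} (hsym : IsSymRel H) (htrans : IsTransRel H) :
    IsEquivRel (H ∪ diagRel) := by
  refine ⟨fun _ => .inr rfl, ?_, ?_⟩
  · rintro i j (hij | hij)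
    · exact .inl (hsym hij)
    · exact .inr (Eq.symm hij)
  · rintro i j k (hij | (rfl : i = j)) hjk
    · obtain hjk | (rfl : j = k) := hjk
      · exact .inl (htrans hij hjk)
      · exact .inl hij
    · exact hjk

/-- The pair sorted increasingly, a computable normal form for the unordered pair. -/
def sortPair (p : ℕ × ℕ) : ℕ × ℕ := (p.1 ⊓ p.2, p.1 ⊔ p.2)

theorem computable_sortPair : Computable sortPair :=
  (Primrec.pair Primrec.nat_min Primrec.nat_max).to_comp

theorem sortPair_eq_iff {p q : ℕ × ℕ} : sortPair p = sortPair q ↔ p = q ∨ p = q.swap :=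
  Prod.mk_inj.trans <|
    (Sym2.inf_eq_inf_and_sup_eq_sup (s := s(p.1, p.2)) (t := s(q.1, q.2))).trans Sym2.mk_eq_mk_iff

theorem IsEnumeration.mem {ν : ℕ → ℕ × ℕ} {R : Set (ℕ × ℕ)} (hν : IsEnumeration ν R) {n : ℕ}
    (hn : 1 ≤ n) : ν n ∈ R :=
  hν.2 ▸ ⟨n, hn, rfl⟩

/-- The sequence `n ↦ π₂(π(n + 1))` of second coordinates of a coding, where `π = ν ∘ ξ`; the index
is shifted so that it runs over all of `ℕ`. -/
def code (ν : ℕ → ℕ × ℕ) (ξ : ℕ → ℕ) (n : ℕ) : ℕ := (ν (ξ (n + 1))).2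

/-- The relation on the values of `code` induced by identifying indices whose pairs under `ν` have
the same `key`. It is `T_ξ` for `key = id` and `S_ξ ∪ T_ξ` for `key = sortPair`. -/
def codeKer {α : Type*} (key : ℕ × ℕ → α) (ν : ℕ → ℕ × ℕ) (ξ : ℕ → ℕ) : Set (ℕ × ℕ) :=
  Prod.map (code ν ξ) (code ν ξ) '' kerRel fun n => key (ν (n + 1))

section Coding

variable {E : Set (ℕ × ℕ)} {ν : ℕ → ℕ × ℕ} {ξ : ℕ → ℕ}

theorem mem_codeKer {α : Type*} {key : ℕ × ℕ → α} {e : ℕ × ℕ} :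
    e ∈ codeKer key ν ξ ↔ ∃ m, 1 ≤ m ∧ ∃ n, 1 ≤ n ∧ key (ν n) = key (ν m) ∧
      e = ((ν (ξ m)).2, (ν (ξ n)).2) := by
  constructor
  · rintro ⟨⟨m, n⟩, hmn, rfl⟩
    exact ⟨m + 1, m.succ_pos, n + 1, n.succ_pos, Eq.symm hmn, rfl⟩
  · rintro ⟨m, hm, n, hn, hmn, rfl⟩
    obtain ⟨m, rfl⟩ := Nat.exists_eq_succ_of_ne_zero (Nat.one_le_iff_ne_zero.1 hm)
    obtain ⟨n, rfl⟩ := Nat.exists_eq_succ_of_ne_zero (Nat.one_le_iff_ne_zero.1 hn)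
    exact ⟨(m, n), hmn.symm, rfl⟩

theorem Tcod_eq_codeKer : Tcod ν ξ = codeKer id ν ξ :=
  Set.ext fun _ => (mem_codeKer (key := id)).symm

theorem Scod_union_Tcod_eq_codeKer : Scod ν ξ ∪ Tcod ν ξ = codeKer sortPair ν ξ := by
  ext e
  simp only [mem_codeKer, sortPair_eq_iff, or_and_right, exists_or, and_or_left]
  exact or_comm

theorem isSymRel_codeKer {α : Type*} (key : ℕ × ℕ → α) : IsSymRel (codeKer key ν ξ) :=
  (isSymRel_kerRel _).image_prodMap _

namespace IsCoding

theorem strictMono_code (hξ : IsCoding ν ξ) : StrictMono (code ν ξ) := by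
  obtain ⟨-, -, -, -, hstep⟩ := hξ
  exact strictMono_nat_of_lt_succ fun n => (max_lt_iff.1 (hstep (n + 1) n.succ_pos).2.2).2

theorem computable_code (hξ : IsCoding ν ξ) (hν : Computable ν) : Computable (code ν ξ) :=
  Computable.snd.comp (hν.comp (hξ.1.comp .succ))

theorem isTransRel_codeKer {α : Type*} (hξ : IsCoding ν ξ) (key : ℕ × ℕ → α) :
    IsTransRel (codeKer key ν ξ) :=
  (isTransRel_kerRel _).image_prodMap hξ.strictMono_code.injective

theorem decidableRelSet_codeKer {α : Type*} [Primcodable α] (hξ : IsCoding ν ξ)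
    (hν : Computable ν) {key : ℕ × ℕ → α} (hkey : Computable key) :
    DecidableRelSet (codeKer key ν ξ) :=
  (decidableRelSet_kerRel (hkey.comp (hν.comp .succ))).image_prodMap (hξ.computable_code hν)
    hξ.strictMono_code

theorem one_le (hξ : IsCoding ν ξ) : ∀ {n}, 1 ≤ n → 1 ≤ ξ n
  | 1, _ => hξ.2.1.le
  | n + 2, _ => Nat.one_le_of_lt (hξ.2.2.2.2 (n + 1) n.succ_pos).1

theorem fst_apply (hξ : IsCoding ν ξ) : ∀ {n}, 1 ≤ n → (ν (ξ n)).1 = (ν n).1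
  | 1, _ => hξ.2.2.1
  | n + 2, _ => (hξ.2.2.2.2 (n + 1) n.succ_pos).2.1

theorem mk_fst_snd_mem (hξ : IsCoding ν ξ) (hν : IsEnumeration ν E) {n : ℕ} (hn : 1 ≤ n) :
    ((ν n).1, (ν (ξ n)).2) ∈ E :=
  hξ.fst_apply hn ▸ hν.mem (hξ.one_le hn)

end IsCoding

theorem Scod_union_Tcod_subset (hE : IsEquivRel E) (hν : IsEnumeration ν E) (hξ : IsCoding ν ξ) :
    Scod ν ξ ∪ Tcod ν ξ ⊆ E := by
  obtain ⟨hrefl, hsymm, htrans⟩ := hE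
  have mem_of_fst_mem {m n : ℕ} (hm : 1 ≤ m) (hn : 1 ≤ n) (hmn : ((ν m).1, (ν n).1) ∈ E) :
      ((ν (ξ m)).2, (ν (ξ n)).2) ∈ E :=
    htrans (hsymm (hξ.mk_fst_snd_mem hν hm)) (htrans hmn (hξ.mk_fst_snd_mem hν hn))
  rintro _ (⟨m, hm, n, hn, hmn, rfl⟩ | ⟨m, hm, n, hn, hmn, rfl⟩)
  · refine mem_of_fst_mem hm hn ?_
    rw [hmn]
    exact hν.mem hm
  · refine mem_of_fst_mem hm hn ?_
    rw [hmn]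
    exact hrefl _

end Coding

theorem stmt_14 (E : Set (ℕ × ℕ)) (ν : ℕ → ℕ × ℕ) (ξ : ℕ → ℕ)
    (hE : IsEquivRel E) (hIC : IC E) (hν : IsEnumeration ν E)
    (hξ : IsCoding ν ξ) :
    DecidableRelSet (Tcod ν ξ) ∧ Tcod ν ξ ⊆ E ∧
    IsSymRel (Scod ν ξ ∪ Tcod ν ξ) ∧ IsTransRel (Scod ν ξ ∪ Tcod ν ξ) ∧
    Scod ν ξ ∪ Tcod ν ξ ∪ diagRel ⊆ E ∧
    IsEquivRel (Scod ν ξ ∪ Tcod ν ξ ∪ diagRel) ∧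
    DecidableRelSet (Scod ν ξ ∪ Tcod ν ξ) ∧
    DecidableRelSet (Scod ν ξ ∪ Tcod ν ξ ∪ diagRel) := by
  have hT : DecidableRelSet (Tcod ν ξ) :=
    Tcod_eq_codeKer ▸ hξ.decidableRelSet_codeKer hν.1 Computable.id
  have hST : DecidableRelSet (Scod ν ξ ∪ Tcod ν ξ) :=
    Scod_union_Tcod_eq_codeKer ▸ hξ.decidableRelSet_codeKer hν.1 computable_sortPair
  have hsub : Scod ν ξ ∪ Tcod ν ξ ⊆ E := Scod_union_Tcod_subset hE hν hξ
  have hsym : IsSymRel (Scod ν ξ ∪ Tcod ν ξ) :=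
    Scod_union_Tcod_eq_codeKer ▸ isSymRel_codeKer sortPair
  have htrans : IsTransRel (Scod ν ξ ∪ Tcod ν ξ) :=
    Scod_union_Tcod_eq_codeKer ▸ hξ.isTransRel_codeKer sortPair
  exact ⟨hT, Set.subset_union_right.trans hsub, hsym, htrans,
    Set.union_subset hsub hE.diagRel_subset, isEquivRel_union_diagRel hsym htrans, hST,
    computablePred_or hST decidableRelSet_diagRel⟩
end
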